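/- Uniform Lipschitz continuity in time of the Riccati solutions: let (A_n, B_n, C_n, Q_n, R_n, m^n), n ∈ ℕ, be coefficient data all having the same terminal matrices P(i), and assume the uniform bounds sup_n max_{i∈S} (‖A_n(i)‖ + ‖B_n(i)‖ + ‖C_n(i)‖ + ‖Q_n(i)‖) < ∞, sup_n max_{i,j∈S} |m^n_{ij}| < ∞, and that there exists δ > 0 such that R_n(i) ⪰ δ I for all n ∈ ℕ and i ∈ S. Let K_n solve the coupled Riccati system associated with the n-th datum. Then there exists a constant k₁ > 0, independent of n and i, such that ‖K_n(t,i) − K_n(s,i)‖ ≤ k₁ |t − s| for all s, t ∈ [0,T], all n ∈ ℕ, and all i ∈ S; in particular each map t ↦ K_n(t,i) is Lipschitz continuous on [0,T] uniformly in i and n. -/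

import Mathlib

open Matrix Set Filter Topology

attribute [local instance] Matrix.normedAddCommGroup Matrix.normedSpace

noncomputable section

/-- Right-hand side of the coupled Riccati system associated with a coefficient
datum `(A, B, C, Q, R, m)`, evaluated at the tuple of matrices `K : Fin N → Matrix`. -/
def riccatiRHS {d l N : ℕ}
    (A C : Fin N → Matrix (Fin d) (Fin d) ℝ)
    (B : Fin N → Matrix (Fin d) (Fin l) ℝ)
    (Q : Fin N → Matrix (Fin d) (Fin d) ℝ)
    (R : Fin N → Matrix (Fin l) (Fin l) ℝ)
    (m : Fin N → Fin N → ℝ)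
    (K : Fin N → Matrix (Fin d) (Fin d) ℝ) (i : Fin N) :
    Matrix (Fin d) (Fin d) ℝ :=
  (C i)ᵀ * K i * C i + (A i)ᵀ * K i + K i * A i
    - K i * B i * (R i)⁻¹ * (B i)ᵀ * K i + Q i + ∑ j, m i j • K j

/-- `K : ℝ → Fin N → Matrix` is a solution on `[0,T]` of the coupled Riccati
terminal value problem: it takes symmetric values, is differentiable in `t` with
`−K̇(t,i)` equal to the Riccati right-hand side, and satisfies `K(T,i) = P i`. -/
def IsRiccatiSolution {d l N : ℕ} (T : ℝ)
    (A C : Fin N → Matrix (Fin d) (Fin d) ℝ)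
    (B : Fin N → Matrix (Fin d) (Fin l) ℝ)
    (Q : Fin N → Matrix (Fin d) (Fin d) ℝ)
    (R : Fin N → Matrix (Fin l) (Fin l) ℝ)
    (m : Fin N → Fin N → ℝ)
    (P : Fin N → Matrix (Fin d) (Fin d) ℝ)
    (K : ℝ → Fin N → Matrix (Fin d) (Fin d) ℝ) : Prop :=
  (∀ t ∈ Icc (0:ℝ) T, ∀ i, (K t i).IsSymm) ∧
  (∀ t ∈ Icc (0:ℝ) T, ∀ i,
    HasDerivWithinAt (fun s => K s i)
      (-(riccatiRHS A C B Q R m (K t) i)) (Icc (0:ℝ) T) t) ∧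
  (∀ i, K T i = P i)

/-- The derivative of a quadratic form along a differentiable curve of matrices. -/
theorem HasDerivWithinAt.dotProduct_mulVec_self {ι : Type*} [Fintype ι]
    {F : ℝ → Matrix ι ι ℝ} {F' : Matrix ι ι ℝ} {s : Set ℝ} {t : ℝ}
    (h : HasDerivWithinAt F F' s t) (x : ι → ℝ) :
    HasDerivWithinAt (fun r => x ⬝ᵥ F r *ᵥ x) (x ⬝ᵥ F' *ᵥ x) s t := by
  have entry : ∀ i j, HasDerivWithinAt (fun r => F r i j) (F' i j) s t := fun i j =>
    hasDerivWithinAt_pi.1 (hasDerivWithinAt_pi.1 h i) j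
  simp only [dotProduct, mulVec]
  exact HasDerivWithinAt.fun_sum fun i _ => HasDerivWithinAt.const_mul _ <|
    HasDerivWithinAt.fun_sum fun j _ => (entry i j).mul_const _

/-- Backward barrier principle: a finite family of symmetric matrix curves that is positive definite
at the terminal time and whose quadratic forms strictly decrease in time along every null vector
stays positive semidefinite. -/
theorem dotProduct_mulVec_nonneg_of_backward_barrier {ι κ : Type*} [Fintype ι] [Finite κ]
    {T : ℝ} {G G' : ℝ → κ → Matrix ι ι ℝ}
    (hsymm : ∀ t ∈ Icc (0 : ℝ) T, ∀ i, (G t i).IsSymm)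
    (hderiv : ∀ t ∈ Icc (0 : ℝ) T, ∀ i,
      HasDerivWithinAt (fun s => G s i) (G' t i) (Icc (0 : ℝ) T) t)
    (hT : ∀ i x, x ≠ 0 → 0 < x ⬝ᵥ G T i *ᵥ x)
    (htouch : ∀ t ∈ Icc (0 : ℝ) T, ∀ i x, x ≠ 0 → (∀ j y, 0 ≤ y ⬝ᵥ G t j *ᵥ y) →
      G t i *ᵥ x = 0 → x ⬝ᵥ G' t i *ᵥ x < 0) :
    ∀ t ∈ Icc (0 : ℝ) T, ∀ i x, 0 ≤ x ⬝ᵥ G t i *ᵥ x := by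
  have hcont : ∀ i, ContinuousOn (fun p : ℝ × (ι → ℝ) => p.2 ⬝ᵥ G p.1 i *ᵥ p.2)
      (Icc (0 : ℝ) T ×ˢ Metric.sphere (0 : ι → ℝ) 1) := by
    intro i
    have hG : ContinuousOn (fun s => G s i) (Icc (0 : ℝ) T) := fun t ht =>
      (hderiv t ht i).continuousWithinAt
    have hG2 : ContinuousOn (fun p : ℝ × (ι → ℝ) => G p.1 i)
        (Icc (0 : ℝ) T ×ˢ Metric.sphere (0 : ι → ℝ) 1) :=
      hG.comp continuousOn_fst fun p hp => hp.1
    have hentry : ∀ a b, ContinuousOn (fun p : ℝ × (ι → ℝ) => G p.1 i a b)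
        (Icc (0 : ℝ) T ×ˢ Metric.sphere (0 : ι → ℝ) 1) := fun a b =>
      continuousOn_pi.1 (continuousOn_pi.1 hG2 a) b
    simp only [dotProduct, mulVec]
    exact continuousOn_finsetSum _ fun a _ => ContinuousOn.mul (by fun_prop) <|
      continuousOn_finsetSum _ fun b _ => (hentry a b).mul (by fun_prop)
  set bad : Set ℝ := ⋃ i, Prod.fst '' ((Icc (0 : ℝ) T ×ˢ Metric.sphere (0 : ι → ℝ) 1) ∩
    (fun p : ℝ × (ι → ℝ) => p.2 ⬝ᵥ G p.1 i *ᵥ p.2) ⁻¹' Iic 0) with hbad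
  have hcompact : IsCompact bad := by
    refine isCompact_iUnion fun i => IsCompact.image ?_ continuous_fst
    have hK : IsCompact (Icc (0 : ℝ) T ×ˢ Metric.sphere (0 : ι → ℝ) 1) :=
      isCompact_Icc.prod (isCompact_sphere _ _)
    exact hK.of_isClosed_subset
      ((hcont i).preimage_isClosed_of_isClosed hK.isClosed isClosed_Iic) inter_subset_left
  have mem_bad : ∀ t ∈ Icc (0 : ℝ) T, ∀ i x, x ⬝ᵥ G t i *ᵥ x < 0 → t ∈ bad := by
    intro t ht i x hx
    have hx0 : x ≠ 0 := by
      rintro rfl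
      simp at hx
    refine mem_iUnion.2 ⟨i, (t, ‖x‖⁻¹ • x), ⟨⟨ht, ?_⟩, ?_⟩, rfl⟩
    · simp [norm_smul, hx0]
    · simp only [mem_preimage, mem_Iic, mulVec_smul, dotProduct_smul, smul_dotProduct, smul_eq_mul]
      have : 0 < ‖x‖⁻¹ := by positivity
      exact (mul_neg_of_pos_of_neg this (mul_neg_of_pos_of_neg this hx)).le
  by_contra! hneg
  obtain ⟨t₁, ht₁, i₁, x₁, hx₁⟩ := hneg
  obtain ⟨t₀, ht₀, hmax⟩ := hcompact.exists_isGreatest ⟨t₁, mem_bad t₁ ht₁ i₁ x₁ hx₁⟩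
  obtain ⟨i, ⟨_, x⟩, ⟨⟨htI, hxs⟩, hle⟩, rfl⟩ := mem_iUnion.1 ht₀
  simp only [mem_preimage, mem_Iic] at hle htI hxs ht₀ hmax
  rename_i t
  have hx0 : x ≠ 0 := by
    rintro rfl
    simp at hxs
  have htT : t < T := by
    refine lt_of_le_of_ne htI.2 ?_
    rintro rfl
    exact absurd (hT i x hx0) (not_lt.2 hle)
  have hafter : ∀ s ∈ Ioo t T, ∀ j y, 0 ≤ y ⬝ᵥ G s j *ᵥ y := by
    intro s hs j y
    by_contra! h
    exact absurd (hmax (mem_bad s ⟨htI.1.trans hs.1.le, hs.2.le⟩ j y h)) (not_le.2 hs.1)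
  have hsub : Ioo t T ⊆ Icc 0 T := fun s hs => ⟨htI.1.trans hs.1.le, hs.2.le⟩
  have : (𝓝[Ioo t T] t).NeBot := by
    rw [nhdsWithin_Ioo_eq_nhdsGT htT]
    infer_instance
  have hd : ∀ j y, HasDerivWithinAt (fun r => y ⬝ᵥ G r j *ᵥ y) (y ⬝ᵥ G' t j *ᵥ y) (Ioo t T) t :=
    fun j y => ((hderiv t htI j).mono hsub).dotProduct_mulVec_self y
  have hnow : ∀ j y, 0 ≤ y ⬝ᵥ G t j *ᵥ y := fun j y =>
    ge_of_tendsto (hd j y).continuousWithinAt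
      (eventually_nhdsWithin_of_forall fun s hs => hafter s hs j y)
  have hzero : x ⬝ᵥ G t i *ᵥ x = 0 := le_antisymm hle (hnow i x)
  have hpsd : (G t i).PosSemidef :=
    .of_dotProduct_mulVec_nonneg ((conjTranspose_eq_transpose_of_trivial _).trans (hsymm t htI i))
      (by simpa using hnow i)
  have hnull : G t i *ᵥ x = 0 := (hpsd.dotProduct_mulVec_zero_iff x).1 (by simpa using hzero)
  have hslope := (hasDerivWithinAt_iff_tendsto_slope' (by simp)).1 (hd i x)
  refine absurd (htouch t htI i x hx0 hnow hnull) (not_lt.2 (ge_of_tendsto hslope ?_))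
  refine eventually_nhdsWithin_of_forall fun s hs => ?_
  rw [slope_def_field, hzero, sub_zero]
  exact div_nonneg (hafter s hs i x) (sub_nonneg.2 hs.1.le)

/-- The entrywise sup norm of matrices is submultiplicative up to the inner dimension. -/
theorem Matrix.entrywise_sup_norm_mul_le {m n p : Type*} [Fintype m] [Fintype n] [Fintype p]
    (M : Matrix m n ℝ) (L : Matrix n p ℝ) : ‖M * L‖ ≤ Fintype.card n * ‖M‖ * ‖L‖ := by
  refine (norm_le_iff (by positivity)).2 fun i j => ?_
  rw [mul_apply, mul_assoc, ← nsmul_eq_mul]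
  refine (norm_sum_le _ _).trans (Finset.sum_le_card_nsmul _ _ _ fun k _ => ?_)
  rw [norm_mul]
  gcongr <;> exact norm_entry_le_entrywise_sup_norm _

/-- A quadratic form is bounded through the entrywise sup norm of its matrix. -/
theorem Matrix.abs_dotProduct_mulVec_self_le {n : Type*} [Fintype n] (M : Matrix n n ℝ)
    (x : n → ℝ) : |x ⬝ᵥ M *ᵥ x| ≤ Fintype.card n * ‖M‖ * (x ⬝ᵥ x) := by
  have hterm : ∀ i j, |x i * (M i j * x j)| ≤ ‖M‖ * ((x i * x i + x j * x j) / 2) := by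
    intro i j
    have h1 : |M i j| ≤ ‖M‖ := norm_entry_le_entrywise_sup_norm M
    have h2 : |x i| * |x j| ≤ (x i * x i + x j * x j) / 2 := by
      nlinarith [sq_nonneg (|x i| - |x j|), abs_mul_abs_self (x i), abs_mul_abs_self (x j)]
    calc |x i * (M i j * x j)| = |M i j| * (|x i| * |x j|) := by
          rw [abs_mul, abs_mul]
          ring
      _ ≤ _ := by gcongr
  simp only [dotProduct, mulVec, Finset.mul_sum]
  calc |∑ i, ∑ j, x i * (M i j * x j)|
      ≤ ∑ i, ∑ j, |x i * (M i j * x j)| :=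
        (Finset.abs_sum_le_sum_abs _ _).trans
          (Finset.sum_le_sum fun i _ => Finset.abs_sum_le_sum_abs _ _)
    _ ≤ ∑ i, ∑ j, ‖M‖ * ((x i * x i + x j * x j) / 2) :=
        Finset.sum_le_sum fun i _ => Finset.sum_le_sum fun j _ => hterm i j
    _ = ∑ i, Fintype.card n * ‖M‖ * (x i * x i) := by
        simp only [← Finset.mul_sum, ← Finset.sum_div, Finset.sum_add_distrib, Finset.sum_const,
          Finset.card_univ, nsmul_eq_mul, mul_left_comm (x _) (Fintype.card n : ℝ)]
        ring

/-- The Euclidean length of `M *ᵥ x` is bounded through the entrywise sup norm of `M`. -/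
theorem Matrix.mulVec_dotProduct_mulVec_self_le {m n : Type*} [Fintype m] [Fintype n]
    (M : Matrix m n ℝ) (x : n → ℝ) :
    (M *ᵥ x) ⬝ᵥ (M *ᵥ x) ≤ Fintype.card n * (Fintype.card m * ‖M‖ ^ 2) * (x ⬝ᵥ x) := by
  have h : (M *ᵥ x) ⬝ᵥ (M *ᵥ x) = x ⬝ᵥ (Mᵀ * M) *ᵥ x := by
    rw [← mulVec_mulVec, dotProduct_transpose_mulVec]
  have hx : 0 ≤ x ⬝ᵥ x := by simpa using dotProduct_star_self_nonneg x
  rw [h]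
  refine (le_abs_self _).trans ((abs_dotProduct_mulVec_self_le _ x).trans ?_)
  gcongr
  refine (entrywise_sup_norm_mul_le _ _).trans_eq ?_
  rw [norm_transpose]
  ring

/-- A symmetric matrix whose quadratic form is bounded by `r` on unit vectors has entries bounded
by `r`. -/
theorem Matrix.IsSymm.norm_le_of_abs_dotProduct_mulVec_le {n : Type*} [Fintype n]
    {M : Matrix n n ℝ} (hM : M.IsSymm) {r : ℝ} (hr : 0 ≤ r)
    (h : ∀ x, |x ⬝ᵥ M *ᵥ x| ≤ r * (x ⬝ᵥ x)) : ‖M‖ ≤ r := by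
  classical
  refine (norm_le_iff hr).2 fun i j => ?_
  have hp := h (Pi.single i 1 + Pi.single j 1)
  have hn := h (Pi.single i 1 - Pi.single j 1)
  simp only [mulVec_add, mulVec_sub, dotProduct_add, add_dotProduct, dotProduct_sub,
    sub_dotProduct, mulVec_single_one, single_one_dotProduct, col_apply, hM.apply i j] at hp hn
  rw [abs_le] at hp hn
  rw [Real.norm_eq_abs, abs_le]
  simp only [Pi.single_eq_same] at hp hn
  constructor <;> linarith [hp.1, hp.2, hn.1, hn.2, hM.apply i j]

/-- If `R ⪰ δ I`, the quadratic form of `R⁻¹` is bounded by `δ⁻¹`. -/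
theorem Matrix.PosDef.dotProduct_inv_mulVec_le {n : Type*} [Fintype n] [DecidableEq n]
    {R : Matrix n n ℝ} (hR : R.PosDef) {δ : ℝ} (hδ : 0 < δ)
    (hRδ : (R - δ • (1 : Matrix n n ℝ)).PosSemidef) (x : n → ℝ) :
    x ⬝ᵥ R⁻¹ *ᵥ x ≤ δ⁻¹ * (x ⬝ᵥ x) := by
  set y := R⁻¹ *ᵥ x with hy
  have hRy : R *ᵥ y = x := by
    rw [hy, mulVec_mulVec, mul_nonsing_inv _ ((isUnit_iff_isUnit_det R).1 hR.isUnit), one_mulVec]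
  have h1 := hRδ.dotProduct_mulVec_nonneg y
  simp only [star_trivial, sub_mulVec, smul_mulVec, one_mulVec, hRy, dotProduct_sub,
    dotProduct_smul, smul_eq_mul] at h1
  have h2 : 0 ≤ (δ • y - x) ⬝ᵥ (δ • y - x) := by
    simpa using dotProduct_star_self_nonneg (δ • y - x)
  simp only [dotProduct_sub, sub_dotProduct, dotProduct_smul, smul_dotProduct, smul_eq_mul,
    dotProduct_comm x y] at h2
  rw [dotProduct_comm y x] at h1 h2
  rw [inv_mul_eq_div, le_div_iff₀ hδ]
  nlinarith

/-- A generator row applied to a vector that is maximal at its own index is nonpositive. -/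
theorem sum_generator_mul_nonpos {κ : Type*} [Fintype κ] {r q : κ → ℝ} {i : κ}
    (hr : ∀ j, i ≠ j → 0 ≤ r j) (hsum : ∑ j, r j = 0) (hq : ∀ j, q j ≤ q i) :
    ∑ j, r j * q j ≤ 0 := by
  have h : ∑ j, r j * q j = ∑ j, r j * (q j - q i) := by
    simp [mul_sub, ← Finset.sum_mul, hsum]
  rw [h]
  refine Finset.sum_nonpos fun j _ => ?_
  by_cases hij : i = j
  · simp [hij]
  · exact mul_nonpos_of_nonneg_of_nonpos (hr j hij) (sub_nonpos.2 (hq j))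

/-- The quadratic form of the Riccati right-hand side at an eigenvector. -/
theorem dotProduct_riccatiRHS_mulVec_of_eigenvector {d l N : ℕ}
    (A C : Fin N → Matrix (Fin d) (Fin d) ℝ) (B : Fin N → Matrix (Fin d) (Fin l) ℝ)
    (Q : Fin N → Matrix (Fin d) (Fin d) ℝ) (R : Fin N → Matrix (Fin l) (Fin l) ℝ)
    (m : Fin N → Fin N → ℝ) {K : Fin N → Matrix (Fin d) (Fin d) ℝ} {i : Fin N}
    (hK : (K i).IsSymm) {x : Fin d → ℝ} {μ : ℝ} (hx : K i *ᵥ x = μ • x) :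
    x ⬝ᵥ riccatiRHS A C B Q R m K i *ᵥ x =
      (C i *ᵥ x) ⬝ᵥ K i *ᵥ (C i *ᵥ x) + 2 * μ * (x ⬝ᵥ A i *ᵥ x)
        - μ ^ 2 * (((B i)ᵀ *ᵥ x) ⬝ᵥ (R i)⁻¹ *ᵥ ((B i)ᵀ *ᵥ x))
        + x ⬝ᵥ Q i *ᵥ x + ∑ j, m i j * (x ⬝ᵥ K j *ᵥ x) := by
  have hleft : ∀ y, x ⬝ᵥ K i *ᵥ y = μ * (x ⬝ᵥ y) := by
    intro y
    rw [← hK.eq, dotProduct_transpose_mulVec, hx, dotProduct_smul, smul_eq_mul, dotProduct_comm]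
  have hB : ∀ y, x ⬝ᵥ B i *ᵥ y = ((B i)ᵀ *ᵥ x) ⬝ᵥ y := by
    intro y
    rw [dotProduct_comm _ y, dotProduct_transpose_mulVec]
  simp only [riccatiRHS, add_mulVec, sub_mulVec, dotProduct_add, dotProduct_sub, ← mulVec_mulVec,
    hx, hleft, hB, mulVec_smul, dotProduct_smul, smul_eq_mul, sum_mulVec, dotProduct_sum,
    smul_mulVec]
  rw [dotProduct_transpose_mulVec, dotProduct_comm (K i *ᵥ C i *ᵥ x),
    dotProduct_transpose_mulVec, dotProduct_comm x (A i *ᵥ x)]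
  ring

theorem hasDerivAt_const_mul_exp_backward (a c T t : ℝ) :
    HasDerivAt (fun s => a * Real.exp (c * (T - s))) (-(c * (a * Real.exp (c * (T - t))))) t := by
  have h : HasDerivAt (fun s => c * (T - s)) (c * -1) t :=
    ((hasDerivAt_id t).const_sub T).const_mul c
  exact (h.exp.const_mul a).congr_deriv (by ring)

theorem dotProduct_self_pos {n : Type*} [Fintype n] {x : n → ℝ} (hx : x ≠ 0) : 0 < x ⬝ᵥ x := by
  simpa using dotProduct_star_self_pos_iff.2 hx

/-- A priori upper bound for Riccati solutions. -/
theorem IsRiccatiSolution.dotProduct_mulVec_le {d l N : ℕ} {T : ℝ}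
    {A C : Fin N → Matrix (Fin d) (Fin d) ℝ} {B : Fin N → Matrix (Fin d) (Fin l) ℝ}
    {Q : Fin N → Matrix (Fin d) (Fin d) ℝ} {R : Fin N → Matrix (Fin l) (Fin l) ℝ}
    {m : Fin N → Fin N → ℝ} {P : Fin N → Matrix (Fin d) (Fin d) ℝ}
    {K : ℝ → Fin N → Matrix (Fin d) (Fin d) ℝ} (hK : IsRiccatiSolution T A C B Q R m P K)
    (hR : ∀ i, (R i).PosDef) (hm₁ : ∀ i j, i ≠ j → 0 ≤ m i j) (hm₂ : ∀ i, ∑ j, m i j = 0)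
    {M : ℝ} (hA : ∀ i, ‖A i‖ ≤ M) (hC : ∀ i, ‖C i‖ ≤ M) (hQ : ∀ i, ‖Q i‖ ≤ M)
    {α : ℝ} (hα : 1 ≤ α) (hP : ∀ i x, x ≠ 0 → x ⬝ᵥ P i *ᵥ x < α * (x ⬝ᵥ x)) :
    ∀ t ∈ Icc (0 : ℝ) T, ∀ i x, x ⬝ᵥ K t i *ᵥ x ≤
      α * Real.exp ((d * (d * M ^ 2) + 3 * (d * M) + 1) * (T - t)) * (x ⬝ᵥ x) := by
  obtain ⟨hsymm, hderiv, hterm⟩ := hK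
  set c : ℝ := d * (d * M ^ 2) + 3 * (d * M) + 1 with hc
  set φ : ℝ → ℝ := fun t => α * Real.exp (c * (T - t)) with hφ
  have form : ∀ t i x, x ⬝ᵥ (φ t • (1 : Matrix (Fin d) (Fin d) ℝ) - K t i) *ᵥ x =
      φ t * (x ⬝ᵥ x) - x ⬝ᵥ K t i *ᵥ x := by
    intro t i x
    simp [sub_mulVec, smul_mulVec, dotProduct_sub]
  have key := dotProduct_mulVec_nonneg_of_backward_barrier (T := T)
    (G := fun t i => φ t • (1 : Matrix (Fin d) (Fin d) ℝ) - K t i)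
    (G' := fun t i => (-(c * φ t)) • (1 : Matrix (Fin d) (Fin d) ℝ)
      - -(riccatiRHS A C B Q R m (K t) i))
    (fun t ht i => (isSymm_one.smul _).sub (hsymm t ht i))
    (fun t ht i => ((hasDerivAt_const_mul_exp_backward α c T t).hasDerivWithinAt.smul_const _).sub
      (hderiv t ht i))
    (fun i x hx => by
      rw [form, hterm]
      simpa [hφ] using hP i x hx)
    (by
      intro t ht i x hx hnonneg hnull
      simp only [form, sub_nonneg] at hnonneg
      have hM : 0 ≤ M := (norm_nonneg _).trans (hA i)
      have hc0 : 0 ≤ c := by positivity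
      have hφ1 : 1 ≤ φ t := by
        have : 1 ≤ Real.exp (c * (T - t)) :=
          Real.one_le_exp (mul_nonneg hc0 (sub_nonneg.2 ht.2))
        exact one_le_mul_of_one_le_of_one_le hα this
      have heig : K t i *ᵥ x = φ t • x := by
        simpa [sub_mulVec, smul_mulVec, sub_eq_zero, eq_comm] using hnull
      have hxx := dotProduct_self_pos hx
      have hCx : (C i *ᵥ x) ⬝ᵥ (C i *ᵥ x) ≤ d * (d * M ^ 2) * (x ⬝ᵥ x) := by
        refine (mulVec_dotProduct_mulVec_self_le (C i) x).trans ?_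
        rw [Fintype.card_fin]
        gcongr
        exact hC i
      have hAx : x ⬝ᵥ A i *ᵥ x ≤ d * M * (x ⬝ᵥ x) := by
        refine (le_abs_self _).trans ((abs_dotProduct_mulVec_self_le (A i) x).trans ?_)
        rw [Fintype.card_fin]
        gcongr
        exact hA i
      have hQx : x ⬝ᵥ Q i *ᵥ x ≤ d * M * (x ⬝ᵥ x) := by
        refine (le_abs_self _).trans ((abs_dotProduct_mulVec_self_le (Q i) x).trans ?_)
        rw [Fintype.card_fin]
        gcongr
        exact hQ i
      have hBx : 0 ≤ ((B i)ᵀ *ᵥ x) ⬝ᵥ (R i)⁻¹ *ᵥ ((B i)ᵀ *ᵥ x) := by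
        simpa using (hR i).inv.posSemidef.dotProduct_mulVec_nonneg ((B i)ᵀ *ᵥ x)
      have hgen : ∑ j, m i j * (x ⬝ᵥ K t j *ᵥ x) ≤ 0 := by
        refine sum_generator_mul_nonpos (hm₁ i) (hm₂ i) fun j => (hnonneg j x).trans_eq ?_
        rw [heig, dotProduct_smul, smul_eq_mul]
      have hrhs := dotProduct_riccatiRHS_mulVec_of_eigenvector A C B Q R m (hsymm t ht i) heig
      rw [sub_neg_eq_add, add_mulVec, dotProduct_add, hrhs, smul_mulVec, one_mulVec,
        dotProduct_smul, smul_eq_mul]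
      have hφ0 : 0 ≤ φ t := zero_le_one.trans hφ1
      have hKC := (hnonneg i (C i *ᵥ x)).trans (mul_le_mul_of_nonneg_left hCx hφ0)
      have hAscaled := mul_le_mul_of_nonneg_left hAx hφ0
      have hscaled : x ⬝ᵥ Q i *ᵥ x ≤ φ t * (d * M * (x ⬝ᵥ x)) :=
        hQx.trans (le_mul_of_one_le_left (by positivity) hφ1)
      have hquad : 0 ≤ φ t ^ 2 * (((B i)ᵀ *ᵥ x) ⬝ᵥ (R i)⁻¹ *ᵥ ((B i)ᵀ *ᵥ x)) := by positivity
      have hpos : 0 < φ t * (x ⬝ᵥ x) := by positivity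
      rw [hc]
      linarith)
  intro t ht i x
  have := key t ht i x
  rw [form] at this
  linarith

/-- A priori lower bound for Riccati solutions. -/
theorem IsRiccatiSolution.neg_dotProduct_self_le {d l N : ℕ} {T : ℝ}
    {A C : Fin N → Matrix (Fin d) (Fin d) ℝ} {B : Fin N → Matrix (Fin d) (Fin l) ℝ}
    {Q : Fin N → Matrix (Fin d) (Fin d) ℝ} {R : Fin N → Matrix (Fin l) (Fin l) ℝ}
    {m : Fin N → Fin N → ℝ} {P : Fin N → Matrix (Fin d) (Fin d) ℝ}
    {K : ℝ → Fin N → Matrix (Fin d) (Fin d) ℝ} (hK : IsRiccatiSolution T A C B Q R m P K)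
    (hR : ∀ i, (R i).PosDef) (hQ : ∀ i, (Q i).PosSemidef) (hP : ∀ i, (P i).PosDef)
    (hm₁ : ∀ i j, i ≠ j → 0 ≤ m i j) (hm₂ : ∀ i, ∑ j, m i j = 0)
    {M : ℝ} (hA : ∀ i, ‖A i‖ ≤ M) (hB : ∀ i, ‖B i‖ ≤ M) (hC : ∀ i, ‖C i‖ ≤ M)
    {δ : ℝ} (hδ : 0 < δ) (hRδ : ∀ i, (R i - δ • (1 : Matrix (Fin l) (Fin l) ℝ)).PosSemidef) :
    ∀ t ∈ Icc (0 : ℝ) T, ∀ i x, -(x ⬝ᵥ x) ≤ x ⬝ᵥ K t i *ᵥ x := by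
  obtain ⟨hsymm, hderiv, hterm⟩ := hK
  set c : ℝ := d * (d * M ^ 2) + 2 * (d * M) + δ⁻¹ * (d * (l * M ^ 2)) + 1 with hc
  set η : ℝ → ℝ := fun t => Real.exp (-(c * T)) * Real.exp (c * (T - t)) with hη
  have hη0 : ∀ t, 0 < η t := fun t => by positivity
  have hη1 : ∀ t ∈ Icc (0 : ℝ) T, Fin N → η t ≤ 1 := by
    intro t ht i
    have hM : 0 ≤ M := (norm_nonneg _).trans (hA i)
    have hc0 : 0 ≤ c := by positivity
    simp only [hη]
    rw [← Real.exp_add, Real.exp_le_one_iff]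
    nlinarith [mul_nonneg hc0 ht.1]
  have form : ∀ t i x, x ⬝ᵥ (η t • (1 : Matrix (Fin d) (Fin d) ℝ) + K t i) *ᵥ x =
      η t * (x ⬝ᵥ x) + x ⬝ᵥ K t i *ᵥ x := by
    intro t i x
    simp [add_mulVec, smul_mulVec, dotProduct_add]
  have key := dotProduct_mulVec_nonneg_of_backward_barrier (T := T)
    (G := fun t i => η t • (1 : Matrix (Fin d) (Fin d) ℝ) + K t i)
    (G' := fun t i => (-(c * η t)) • (1 : Matrix (Fin d) (Fin d) ℝ)
      + -(riccatiRHS A C B Q R m (K t) i))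
    (fun t ht i => (isSymm_one.smul _).add (hsymm t ht i))
    (fun t ht i =>
      ((hasDerivAt_const_mul_exp_backward _ c T t).hasDerivWithinAt.smul_const _).add
        (hderiv t ht i))
    (fun i x hx => by
      rw [form, hterm]
      have h1 : 0 < x ⬝ᵥ P i *ᵥ x := by simpa using (hP i).dotProduct_mulVec_pos hx
      exact add_pos (mul_pos (hη0 T) (dotProduct_self_pos hx)) h1)
    (by
      intro t ht i x hx hnonneg hnull
      simp only [form] at hnonneg
      have hM : 0 ≤ M := (norm_nonneg _).trans (hA i)
      have hη1t := hη1 t ht i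
      have hη0t := hη0 t
      have heig : K t i *ᵥ x = (-η t) • x := by
        rw [neg_smul]
        simpa [add_mulVec, smul_mulVec, add_eq_zero_iff_eq_neg'] using hnull
      have hxx := dotProduct_self_pos hx
      have hCx : (C i *ᵥ x) ⬝ᵥ (C i *ᵥ x) ≤ d * (d * M ^ 2) * (x ⬝ᵥ x) := by
        refine (mulVec_dotProduct_mulVec_self_le (C i) x).trans ?_
        rw [Fintype.card_fin]
        gcongr
        exact hC i
      have hAx : x ⬝ᵥ A i *ᵥ x ≤ d * M * (x ⬝ᵥ x) := by
        refine (le_abs_self _).trans ((abs_dotProduct_mulVec_self_le (A i) x).trans ?_)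
        rw [Fintype.card_fin]
        gcongr
        exact hA i
      have hBx : ((B i)ᵀ *ᵥ x) ⬝ᵥ ((B i)ᵀ *ᵥ x) ≤ d * (l * M ^ 2) * (x ⬝ᵥ x) := by
        refine (mulVec_dotProduct_mulVec_self_le (B i)ᵀ x).trans ?_
        rw [Fintype.card_fin, Fintype.card_fin, norm_transpose]
        gcongr
        exact hB i
      have hRx : ((B i)ᵀ *ᵥ x) ⬝ᵥ (R i)⁻¹ *ᵥ ((B i)ᵀ *ᵥ x) ≤
          δ⁻¹ * (d * (l * M ^ 2) * (x ⬝ᵥ x)) :=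
        ((hR i).dotProduct_inv_mulVec_le hδ (hRδ i) _).trans (by gcongr)
      have hQx : 0 ≤ x ⬝ᵥ Q i *ᵥ x := by
        simpa using (hQ i).dotProduct_mulVec_nonneg x
      have hgen : ∑ j, m i j * -(x ⬝ᵥ K t j *ᵥ x) ≤ 0 := by
        refine sum_generator_mul_nonpos (hm₁ i) (hm₂ i) fun j => ?_
        rw [heig, dotProduct_smul, smul_eq_mul]
        linarith [hnonneg j x]
      simp only [mul_neg, Finset.sum_neg_distrib] at hgen
      have hrhs := dotProduct_riccatiRHS_mulVec_of_eigenvector A C B Q R m (hsymm t ht i) heig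
      rw [add_mulVec, dotProduct_add, neg_mulVec, dotProduct_neg, hrhs, smul_mulVec, one_mulVec,
        dotProduct_smul, smul_eq_mul]
      have hKC := hnonneg i (C i *ᵥ x)
      have hCη := mul_le_mul_of_nonneg_left hCx hη0t.le
      have hAscaled := mul_le_mul_of_nonneg_left hAx hη0t.le
      have hscaled : η t ^ 2 * (((B i)ᵀ *ᵥ x) ⬝ᵥ (R i)⁻¹ *ᵥ ((B i)ᵀ *ᵥ x)) ≤
          η t * (δ⁻¹ * (d * (l * M ^ 2) * (x ⬝ᵥ x))) := by
        calc _ ≤ η t ^ 2 * (δ⁻¹ * (d * (l * M ^ 2) * (x ⬝ᵥ x))) := by gcongr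
          _ ≤ _ := by
            gcongr
            nlinarith
      have hpos : 0 < η t * (x ⬝ᵥ x) := by positivity
      rw [hc]
      linarith)
  intro t ht i x
  have h1 := key t ht i x
  rw [form] at h1
  have hxx : 0 ≤ x ⬝ᵥ x := by simpa using dotProduct_star_self_nonneg x
  nlinarith [mul_le_mul_of_nonneg_right (hη1 t ht i) hxx]

/-- Bound for the Riccati right-hand side in terms of bounds for its ingredients. -/
theorem norm_riccatiRHS_le {d l N : ℕ}
    {A C : Fin N → Matrix (Fin d) (Fin d) ℝ} {B : Fin N → Matrix (Fin d) (Fin l) ℝ}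
    {Q : Fin N → Matrix (Fin d) (Fin d) ℝ} {R : Fin N → Matrix (Fin l) (Fin l) ℝ}
    {m : Fin N → Fin N → ℝ} {K : Fin N → Matrix (Fin d) (Fin d) ℝ} {M μ ρ φ : ℝ}
    (hA : ∀ i, ‖A i‖ ≤ M) (hB : ∀ i, ‖B i‖ ≤ M) (hC : ∀ i, ‖C i‖ ≤ M) (hQ : ∀ i, ‖Q i‖ ≤ M)
    (hR : ∀ i, ‖(R i)⁻¹‖ ≤ ρ) (hm : ∀ i j, |m i j| ≤ μ) (hK : ∀ i, ‖K i‖ ≤ φ) (i : Fin N) :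
    ‖riccatiRHS A C B Q R m K i‖ ≤
      d * (d * M * φ) * M + d * M * φ + d * φ * M
        + d * (l * (l * (d * φ * M) * ρ) * M) * φ + M + N * (μ * φ) := by
  have hmul : ∀ {a b e : ℕ} {X : Matrix (Fin a) (Fin b) ℝ} {Y : Matrix (Fin b) (Fin e) ℝ}
      {u v : ℝ}, ‖X‖ ≤ u → ‖Y‖ ≤ v → ‖X * Y‖ ≤ b * u * v := by
    intro a b e X Y u v hX hY
    have hu : 0 ≤ u := (norm_nonneg _).trans hX
    refine (entrywise_sup_norm_mul_le X Y).trans ?_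
    rw [Fintype.card_fin]
    gcongr
  have hAt : ‖(A i)ᵀ‖ ≤ M := (norm_transpose _).trans_le (hA i)
  have hBt : ‖(B i)ᵀ‖ ≤ M := (norm_transpose _).trans_le (hB i)
  have hCt : ‖(C i)ᵀ‖ ≤ M := (norm_transpose _).trans_le (hC i)
  have hsum : ‖∑ j, m i j • K j‖ ≤ N * (μ * φ) := by
    refine (norm_sum_le _ _).trans ((Finset.sum_le_card_nsmul _ _ (μ * φ) fun j _ => ?_).trans_eq
      (by simp))
    rw [norm_smul]
    exact mul_le_mul (hm i j) (hK j) (norm_nonneg _) ((abs_nonneg _).trans (hm i j))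
  unfold riccatiRHS
  exact norm_add_le_of_le (norm_add_le_of_le (norm_sub_le_of_le (norm_add_le_of_le
    (norm_add_le_of_le (hmul (hmul hCt (hK i)) (hC i)) (hmul hAt (hK i))) (hmul (hK i) (hA i)))
    (hmul (hmul (hmul (hmul (hK i) (hB i)) (hR i)) hBt) (hK i))) (hQ i)) hsum

/-- Uniform Lipschitz continuity in time of the Riccati solutions. -/
theorem riccati_uniform_lipschitz
    (d l N : ℕ) (hd : 0 < d) (hl : 0 < l) (hN : 0 < N)
    (T : ℝ) (hT : 0 < T)
    (A C Q : ℕ → Fin N → Matrix (Fin d) (Fin d) ℝ)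
    (B : ℕ → Fin N → Matrix (Fin d) (Fin l) ℝ)
    (R : ℕ → Fin N → Matrix (Fin l) (Fin l) ℝ)
    (m : ℕ → Fin N → Fin N → ℝ)
    (P : Fin N → Matrix (Fin d) (Fin d) ℝ)
    (hQ : ∀ n i, (Q n i).PosSemidef)
    (hR : ∀ n i, (R n i).PosDef)
    (hP : ∀ i, (P i).PosDef)
    (hm₁ : ∀ n i j, i ≠ j → 0 ≤ m n i j)
    (hm₂ : ∀ n i, ∑ j, m n i j = 0)
    (hbdd : ∃ M : ℝ, ∀ n i, ‖A n i‖ + ‖B n i‖ + ‖C n i‖ + ‖Q n i‖ ≤ M)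
    (hmbdd : ∃ M : ℝ, ∀ n i j, |m n i j| ≤ M)
    (hδ : ∃ δ > (0:ℝ), ∀ n i, (R n i - δ • (1 : Matrix (Fin l) (Fin l) ℝ)).PosSemidef)
    (K : ℕ → ℝ → Fin N → Matrix (Fin d) (Fin d) ℝ)
    (hK : ∀ n, IsRiccatiSolution T (A n) (C n) (B n) (Q n) (R n) (m n) P (K n)) :
    ∃ k₁ > (0:ℝ), ∀ n, ∀ i, ∀ s ∈ Icc (0:ℝ) T, ∀ t ∈ Icc (0:ℝ) T,
      ‖K n t i - K n s i‖ ≤ k₁ * |t - s| := by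
  obtain ⟨M, hM⟩ := hbdd
  obtain ⟨μ, hμ⟩ := hmbdd
  obtain ⟨δ, hδ, hRδ⟩ := hδ
  have hA : ∀ n i, ‖A n i‖ ≤ M := fun n i => by
    linarith [hM n i, norm_nonneg (B n i), norm_nonneg (C n i), norm_nonneg (Q n i)]
  have hB : ∀ n i, ‖B n i‖ ≤ M := fun n i => by
    linarith [hM n i, norm_nonneg (A n i), norm_nonneg (C n i), norm_nonneg (Q n i)]
  have hC : ∀ n i, ‖C n i‖ ≤ M := fun n i => by
    linarith [hM n i, norm_nonneg (A n i), norm_nonneg (B n i), norm_nonneg (Q n i)]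
  have hQM : ∀ n i, ‖Q n i‖ ≤ M := fun n i => by
    linarith [hM n i, norm_nonneg (A n i), norm_nonneg (B n i), norm_nonneg (C n i)]
  have hM0 : 0 ≤ M := (norm_nonneg _).trans (hA 0 ⟨0, hN⟩)
  have hRinv : ∀ n i, ‖(R n i)⁻¹‖ ≤ δ⁻¹ := by
    intro n i
    have hpsd := (hR n i).inv.posSemidef
    refine IsSymm.norm_le_of_abs_dotProduct_mulVec_le
      ((conjTranspose_eq_transpose_of_trivial _).symm.trans hpsd.isHermitian)
      (by positivity) fun x => ?_
    rw [abs_of_nonneg (by simpa using hpsd.dotProduct_mulVec_nonneg x)]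
    exact (hR n i).dotProduct_inv_mulVec_le hδ (hRδ n i) x
  set α : ℝ := 1 + d * ∑ i, ‖P i‖ with hα
  have hα1 : 1 ≤ α := le_add_of_nonneg_right (by positivity)
  have hPα : ∀ i x, x ≠ 0 → x ⬝ᵥ P i *ᵥ x < α * (x ⬝ᵥ x) := by
    intro i x hx
    have hxx := dotProduct_self_pos hx
    have h1 : ‖P i‖ ≤ ∑ j, ‖P j‖ :=
      Finset.single_le_sum (fun j _ => norm_nonneg (P j)) (Finset.mem_univ i)
    calc x ⬝ᵥ P i *ᵥ x ≤ d * ‖P i‖ * (x ⬝ᵥ x) := by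
          simpa using (le_abs_self _).trans (abs_dotProduct_mulVec_self_le (P i) x)
      _ ≤ d * (∑ j, ‖P j‖) * (x ⬝ᵥ x) := by gcongr
      _ < α * (x ⬝ᵥ x) := by
          rw [hα]
          linarith
  set c : ℝ := d * (d * M ^ 2) + 3 * (d * M) + 1 with hc
  have hc0 : 0 ≤ c := by positivity
  set φ : ℝ := α * Real.exp (c * T) with hφ
  have hφ1 : 1 ≤ φ :=
    one_le_mul_of_one_le_of_one_le hα1 (Real.one_le_exp (mul_nonneg hc0 hT.le))
  have hKφ : ∀ n, ∀ t ∈ Icc (0 : ℝ) T, ∀ i, ‖K n t i‖ ≤ φ := by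
    intro n t ht i
    refine IsSymm.norm_le_of_abs_dotProduct_mulVec_le ((hK n).1 t ht i) (by linarith) fun x => ?_
    have hxx : 0 ≤ x ⬝ᵥ x := by simpa using dotProduct_star_self_nonneg x
    have hlow := (hK n).neg_dotProduct_self_le (hR n) (hQ n) hP (hm₁ n) (hm₂ n) (hA n) (hB n)
      (hC n) hδ (hRδ n) t ht i x
    have hup := (hK n).dotProduct_mulVec_le (hR n) (hm₁ n) (hm₂ n) (hA n) (hC n) (hQM n) hα1 hPα
      t ht i x
    refine abs_le.2 ⟨by nlinarith, hup.trans ?_⟩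
    rw [hφ]
    have : c * (T - t) ≤ c * T := mul_le_mul_of_nonneg_left (by linarith [ht.1]) hc0
    gcongr
  set k : ℝ := d * (d * M * φ) * M + d * M * φ + d * φ * M
        + d * (l * (l * (d * φ * M) * δ⁻¹) * M) * φ + M + N * (μ * φ) with hk
  refine ⟨max k 1, by positivity, fun n i s hs t ht => ?_⟩
  rw [← Real.norm_eq_abs]
  refine Convex.norm_image_sub_le_of_norm_hasDerivWithin_le (fun r hr => (hK n).2.1 r hr i)
    (fun r hr => ?_) (convex_Icc 0 T) hs ht
  rw [norm_neg]
  exact (norm_riccatiRHS_le (hA n) (hB n) (hC n) (hQM n) (hRinv n) (hμ n) (hKφ n r hr) i).trans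
    (le_max_left _ _)
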